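/- Let d₁,…,d_l be integers and let α ∈ Φ^l be a (2d₁,…,2d_l)-regular function, homogeneous of degree −(d₁+⋯+d_l). Fix a partition {1,…,l} = I ⊔ J and write the component of degree n of α with respect to (I,J) (with weights d₁,…,d_l) as (α)_n = Σ_j α'_{−n,j}·α''_{n,j}, where α''_{n,j} ∈ Φ^{|J|} is a rational function of the J-variables homogeneous of degree n − Σ_{j∈J}d_j, and α'_{−n,j} is a rational function of the I-variables homogeneous of degree −n − Σ_{i∈I}d_i. Then the component of degree n of α with respect to the swapped partition (J,I) equals Σ_j (α''_{n,j})*·(α'_{−n,j})*, where for a homogeneous function β of the variables z_i, i ∈ S (S = J or S = I respectively), β* denotes (−1)^{Σ_{i∈S}d_i}·(∏_{i∈S} z_i^{−2d_i})·β with every z_i (i ∈ S) replaced by z_i⁻¹. -/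

import Mathlib

open scoped Classical

noncomputable section

namespace Griess

open MvPolynomial

variable {k : Type} [Field k]

/-- The field `k(z₁,…,z_l)` of rational functions over `k` in `l` variables. -/
abbrev RF (k : Type) [Field k] (l : ℕ) : Type := FractionRing (MvPolynomial (Fin l) k)

/-- The variable `zᵢ` as an element of the rational function field. -/
def zv {k : Type} [Field k] {l : ℕ} (i : Fin l) : RF k l :=
  algebraMap (MvPolynomial (Fin l) k) (RF k l) (MvPolynomial.X i)

/-- The space `Φ^l` of rational functions of the form
`p(z₁,…,z_l) · ∏_{i<j} (zᵢ - z_j)^{k_{ij}}`. -/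
def Phi (k : Type) [Field k] (l : ℕ) : Set (RF k l) :=
  { x | ∃ (p : MvPolynomial (Fin l) k) (e : Fin l → Fin l → ℤ),
      x = algebraMap (MvPolynomial (Fin l) k) (RF k l) p *
        ∏ i : Fin l, ∏ j : Fin l, (if i < j then (zv i - zv j) ^ e i j else 1) }

/-- `D` is the family of partial derivative operators `∂_{z₁},…,∂_{z_l}`:
a family of `k`-linear derivations with `D i (z j) = δ_{ij}`. -/
def IsPartialDeriv {l : ℕ} (D : Fin l → Derivation k (RF k l) (RF k l)) : Prop :=
  ∀ i j : Fin l, D i (zv j) = if j = i then 1 else 0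

/-- The operator `Δ = Σᵢ ∂_{zᵢ}`. -/
def Delta {l : ℕ} (D : Fin l → Derivation k (RF k l) (RF k l)) (α : RF k l) : RF k l :=
  ∑ i, D i α

/-- The operator `Δ*(n₁,…,n_l) = Σᵢ (zᵢ² ∂_{zᵢ} + nᵢ zᵢ)`. -/
def DeltaStar {l : ℕ} (D : Fin l → Derivation k (RF k l) (RF k l)) (n : Fin l → ℤ)
    (α : RF k l) : RF k l :=
  ∑ i, ((zv i) ^ 2 * D i α + (n i : RF k l) * zv i * α)

section Subst

variable {l : ℕ}

/-- The embedding of polynomials in `z₁,…,z_l` into rational functions of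
`z₁,…,z_l` and one extra variable `t` (`= RatFunc.X`). -/
def toRatFuncHom (k : Type) [Field k] (l : ℕ) :
    Polynomial (MvPolynomial (Fin l) k) →+* RatFunc (RF k l) :=
  (algebraMap (Polynomial (RF k l)) (RatFunc (RF k l))).comp
    (Polynomial.mapRingHom (algebraMap (MvPolynomial (Fin l) k) (RF k l)))

lemma toRatFuncHom_injective : Function.Injective (toRatFuncHom k l) := by
  have h1 : Function.Injective (algebraMap (Polynomial (RF k l)) (RatFunc (RF k l))) :=
    IsFractionRing.injective _ _
  have h2 : Function.Injective
      (Polynomial.mapRingHom (algebraMap (MvPolynomial (Fin l) k) (RF k l))) :=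
    Polynomial.map_injective _ (IsFractionRing.injective _ _)
  exact fun a b hab => h2 (h1 hab)

/-- Polynomial level substitution `z_j ↦ t·z_j` for `j ∈ J`. -/
def scaleAux (k : Type) [Field k] (l : ℕ) (J : Finset (Fin l)) :
    MvPolynomial (Fin l) k →+* Polynomial (MvPolynomial (Fin l) k) :=
  (MvPolynomial.aeval (R := k) fun i =>
    if i ∈ J then Polynomial.X * Polynomial.C (MvPolynomial.X i)
    else Polynomial.C (MvPolynomial.X i)).toRingHom

lemma scaleAux_injective (J : Finset (Fin l)) :
    Function.Injective (scaleAux k l J) := by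
  have h : (Polynomial.evalRingHom (1 : MvPolynomial (Fin l) k)).comp (scaleAux k l J)
      = RingHom.id _ := by
    apply MvPolynomial.ringHom_ext
    · intro r; simp [scaleAux]
    · intro i; by_cases hi : i ∈ J <;> simp [scaleAux, hi]
  intro p q hpq
  have hp := DFunLike.congr_fun h p
  have hq := DFunLike.congr_fun h q
  simp only [RingHom.comp_apply, RingHom.id_apply] at hp hq
  rw [← hp, ← hq, hpq]

/-- The substitution `z_j ↦ t·z_j` (for `j ∈ J`), as a map from rational functions
in `z₁,…,z_l` to rational functions in `z₁,…,z_l` and `t`.  Reading off the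
coefficients of the Laurent expansion in `t` at `t = 0` of `scaleJ J α` yields the
decomposition of `α` into its homogeneous components with respect to the total degree
in the variables `{z_j : j ∈ J}`, i.e. the expansion of `α` in the domain where the
variables of `J` are much smaller than the remaining variables. -/
def scaleJ (J : Finset (Fin l)) : RF k l →+* RatFunc (RF k l) :=
  IsFractionRing.lift (g := (toRatFuncHom k l).comp (scaleAux k l J))
    (fun a b hab => scaleAux_injective J (toRatFuncHom_injective hab))

/-- Polynomial level substitution `z_i ↦ z_j + t`. -/
def subPairAux (k : Type) [Field k] (l : ℕ) (i j : Fin l) :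
    MvPolynomial (Fin l) k →+* Polynomial (MvPolynomial (Fin l) k) :=
  (MvPolynomial.aeval (R := k) fun s =>
    if s = i then Polynomial.X + Polynomial.C (MvPolynomial.X j)
    else Polynomial.C (MvPolynomial.X s)).toRingHom

lemma subPairAux_injective (i j : Fin l) :
    Function.Injective (subPairAux k l i j) := by
  have h : (Polynomial.evalRingHom (MvPolynomial.X i - MvPolynomial.X j)).comp
      (subPairAux k l i j) = RingHom.id _ := by
    apply MvPolynomial.ringHom_ext
    · intro r; simp [subPairAux]
    · intro s; by_cases hs : s = i <;> simp [subPairAux, hs]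
  intro p q hpq
  have hp := DFunLike.congr_fun h p
  have hq := DFunLike.congr_fun h q
  simp only [RingHom.comp_apply, RingHom.id_apply] at hp hq
  rw [← hp, ← hq, hpq]

/-- The substitution `z_i ↦ z_j + t`, as a map from rational functions in `z₁,…,z_l`
to rational functions in the variables `z₁,…,z_l` and `t`.  Reading off the Laurent
coefficients in `t` at `t = 0` yields the expansion of a rational function in powers
of `z_i - z_j`, with coefficients not involving `z_i`. -/
def subPair (i j : Fin l) : RF k l →+* RatFunc (RF k l) :=
  IsFractionRing.lift (g := (toRatFuncHom k l).comp (subPairAux k l i j))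
    (fun a b hab => subPairAux_injective i j (toRatFuncHom_injective hab))

end Subst

/-- The coefficient of `tᵐ` in the Laurent expansion at `t = 0` of a rational
function of `t`. -/
def lcoeff {L : Type} [Field L] (m : ℤ) (f : RatFunc L) : L :=
  (f : LaurentSeries L).coeff m

/-- The component `(α)_n` of `α` of degree `n` with respect to the partition
`{1,…,l} = Jᶜ ⊔ J` and the weights `d`:  the part of the expansion of `α` in the
domain where the variables of `J` are much smaller than those of `Jᶜ` whose total
degree in the variables `{z_j : j ∈ J}` equals `n - Σ_{j∈J} d_j`. -/
def component {l : ℕ} (J : Finset (Fin l)) (d : Fin l → ℤ) (n : ℤ) (α : RF k l) :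
    RF k l :=
  lcoeff (n - ∑ j ∈ J, d j) (scaleJ J α)

/-- `α` is homogeneous of total degree `d` in the variables `{z_i : i ∈ S}`:
substituting `z_i ↦ t·z_i` for `i ∈ S` multiplies `α` by `t^d`. -/
def IsHomogeneousOn {l : ℕ} (S : Finset (Fin l)) (d : ℤ) (α : RF k l) : Prop :=
  scaleJ S α = RatFunc.X ^ d * RatFunc.C α

/-- `ρ^{(m)}_{ij} α`: the coefficient of `(z_i - z_j)^m` in the expansion of `α`
in powers of `z_i - z_j` (the coefficients do not involve `z_i`). -/
def rho {l : ℕ} (i j : Fin l) (m : ℤ) (α : RF k l) : RF k l :=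
  lcoeff m (subPair i j α)

/-- `α` is a rational function of the variables `{z_i : i ∈ S}` only. -/
def dependsOnlyOn {l : ℕ} (S : Finset (Fin l)) (α : RF k l) : Prop :=
  α ∈ Subfield.closure (Set.range (algebraMap k (RF k l)) ∪ {x | ∃ i ∈ S, x = zv i})

/-- `α` is an admissible function of the variables `{z_i : i ∈ S}` (the space
`R^{|S|}`):  `α ∈ Φ` is a rational function of the variables of `S` only, it is
`(4,…,4)`-regular and homogeneous of degree `-2|S|` in these variables, and all its
components of negative degree, as well as those of degree `1`, vanish (with respect
to every partition of `S` and all weights equal to `2`). -/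
def Admissible {l : ℕ} (D : Fin l → Derivation k (RF k l) (RF k l)) (S : Finset (Fin l))
    (α : RF k l) : Prop :=
  α ∈ Phi k l ∧ dependsOnlyOn S α ∧
    (∑ i ∈ S, ((zv i) ^ 2 * D i α + 4 * zv i * α)) = 0 ∧
    IsHomogeneousOn S (-(2 * (S.card : ℤ))) α ∧
    ∀ J ⊆ S, ∀ n : ℤ, (n < 0 ∨ n = 1) → component J (fun _ => 2) n α = 0

/-- `α` is an indecomposable admissible function of the variables `{z_i : i ∈ S}`
(the space `R₀^{|S|}`): admissible, and all the components `(α)₀` with respect to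
partitions of `S` into two nonempty parts vanish. -/
def AdmissibleInd {l : ℕ} (D : Fin l → Derivation k (RF k l) (RF k l))
    (S : Finset (Fin l)) (α : RF k l) : Prop :=
  Admissible D S α ∧
    ∀ J ⊆ S, J ≠ ∅ → J ≠ S → component J (fun _ => 2) 0 α = 0

section Shift

variable {l : ℕ}

/-- Polynomial level substitution `z_s ↦ z_s - z_t` for `s ∈ S`. -/
def shiftAuxP (k : Type) [Field k] (l : ℕ) (S : Finset (Fin l)) (t : Fin l) :
    MvPolynomial (Fin l) k →+* MvPolynomial (Fin l) k :=
  (MvPolynomial.aeval (R := k) fun s =>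
    if s ∈ S then MvPolynomial.X s - MvPolynomial.X t else MvPolynomial.X s).toRingHom

lemma shiftAuxP_injective (S : Finset (Fin l)) (t : Fin l) (ht : t ∉ S) :
    Function.Injective (shiftAuxP k l S t) := by
  have h : ((MvPolynomial.aeval (R := k) fun s =>
      if s ∈ S then MvPolynomial.X s + MvPolynomial.X t
      else MvPolynomial.X s).toRingHom).comp (shiftAuxP k l S t) = RingHom.id _ := by
    apply MvPolynomial.ringHom_ext
    · intro r; simp [shiftAuxP]
    · intro s
      by_cases hs : s ∈ S
      · have hst : s ≠ t := fun hst => ht (hst ▸ hs)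
        simp [shiftAuxP, hs, ht]
      · simp [shiftAuxP, hs]
  intro p q hpq
  have hp := DFunLike.congr_fun h p
  have hq := DFunLike.congr_fun h q
  simp only [RingHom.comp_apply, RingHom.id_apply] at hp hq
  rw [← hp, ← hq, hpq]

/-- The shift operator substituting `z_s - z_t` for `z_s`, for all `s ∈ S`. -/
def shiftT (S : Finset (Fin l)) (t : Fin l) (ht : t ∉ S) : RF k l →+* RF k l :=
  IsFractionRing.lift
    (g := (algebraMap (MvPolynomial (Fin l) k) (RF k l)).comp (shiftAuxP k l S t))
    (fun a b hab =>
      shiftAuxP_injective S t ht (IsFractionRing.injective _ _ hab))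

/-- The operator `ℰ = Σ_{s ∈ S} (-z_s⁻¹ ∂_{z_s} + 2 z_s⁻²)`. -/
def curlyE {l : ℕ} (D : Fin l → Derivation k (RF k l) (RF k l)) (S : Finset (Fin l))
    (β : RF k l) : RF k l :=
  ∑ s ∈ S, (-((zv s)⁻¹ * D s β) + 2 * (zv s) ^ (-2 : ℤ) * β)

end Shift

end Griess

/-!
Write `m = ∏ zᵢ^(-nᵢ)` with `nᵢ = 2dᵢ`, let `ι` be the inversion of all variables and `τ_c` the
translation `zᵢ ↦ zᵢ + c`. Conjugation by `ι` turns `Δ*(n)` into `-Δ`, so regularity of `α` says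
that `m · ια` is translation invariant, hence that `α` is covariant under `ι τ_b ι`. Since
`τ_c ι τ_{-1/c} ι` and `ι τ_{1/c}` differ by a dilation, homogeneity gives `τ_c α = (τ_{1/c} α)*`
for all `c ≠ 0`. For `α ∈ Φ` the function `c ↦ τ_c α` is polynomial, and a polynomial `F` satisfying
`F(c) = F(1/c)*` satisfies `F(0) = F(0)*`: thus `α* = α`. Finally `*` exchanges the expansions for
the two orders of the partition.
-/

namespace Griess

section General

universe u

variable {K L : Type u} [Field K]

lemma prod_zpow_eq_zpow_sum₀ {ι : Type*} {a : K} (ha : a ≠ 0) (s : Finset ι) (f : ι → ℤ) :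
    ∏ i ∈ s, a ^ f i = a ^ ∑ i ∈ s, f i := by
  induction s using Finset.induction_on with
  | empty => simp
  | insert i s hi ih => rw [Finset.prod_insert hi, Finset.sum_insert hi, ih, zpow_add₀ ha]

lemma derivation_sum_apply {ι R A M : Type*} [CommSemiring R] [CommSemiring A] [AddCommMonoid M]
    [Algebra R A] [Module A M] [Module R M] (s : Finset ι) (D : ι → Derivation R A M) (a : A) :
    (∑ i ∈ s, D i) a = ∑ i ∈ s, D i a := by
  rw [← Derivation.coeFnAddMonoidHom_apply, map_sum, Finset.sum_apply]
  rfl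

lemma derivation_prod_zpow {ι R : Type*} [CommRing R] [Algebra R K] (δ : Derivation R K K)
    {s : Finset ι} {a : ι → K} (ha : ∀ i ∈ s, a i ≠ 0) (e : ι → ℤ) :
    δ (∏ i ∈ s, a i ^ e i) = (∑ i ∈ s, e i * (a i)⁻¹ * δ (a i)) * ∏ i ∈ s, a i ^ e i := by
  induction s using Finset.induction_on with
  | empty => simp
  | insert j s hj ih =>
    have hj0 : a j ≠ 0 := ha j (Finset.mem_insert_self j s)
    rw [Finset.prod_insert hj, Finset.sum_insert hj, Derivation.leibniz, Derivation.leibniz_zpow,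
      ih fun i hi => ha i (Finset.mem_insert_of_mem hi), zpow_sub_one₀ hj0]
    simp only [smul_eq_mul, zsmul_eq_mul]
    ring

open Polynomial in
lemma eq_zero_of_derivative_mul_eq [CharZero K] {f g : K[X]} {a : K} (hf : f.IsRoot a)
    (hg : ¬ g.IsRoot a) (h : derivative f * g = f * derivative g) : f = 0 := by
  by_contra hf0
  have hg0 : g ≠ 0 := fun hg0 => hg (by simp [hg0])
  have hf' : derivative f ≠ 0 := fun hf' => by
    rw [eq_C_of_natDegree_eq_zero (derivative_eq_zero.1 hf')] at hf hf0
    simp_all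
  have hfg : derivative f * g ≠ 0 := mul_ne_zero hf' hg0
  have hmult := congrArg (rootMultiplicity a) h
  rw [rootMultiplicity_mul hfg, rootMultiplicity_mul (h ▸ hfg),
    derivative_rootMultiplicity_of_root hf, rootMultiplicity_eq_zero hg] at hmult
  have : 0 < rootMultiplicity a f := (rootMultiplicity_pos hf0).2 hf
  omega

open Polynomial in
-- Clearing denominators, `p(x) = q(x⁻¹)` becomes the identity `p * X ^ deg q = reverse q`.
lemma eval_zero_eq_of_eval_eq_eval_inv {p q : K[X]} {s : Set K} (hs : s.Infinite)
    (h : ∀ x ∈ s, x ≠ 0 ∧ p.eval x = q.eval x⁻¹) : p.eval 0 = q.eval 0 := by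
  have hrev : p * X ^ q.natDegree = q.reverse := by
    refine eq_of_infinite_eval_eq _ _ (hs.mono fun x hx => ?_)
    obtain ⟨hx0, hpq⟩ := h x hx
    let := invertibleOfNonzero (inv_ne_zero hx0)
    have := eval₂_reverse_mul_pow (RingHom.id K) x⁻¹ q
    rw [invOf_eq_inv, inv_inv, eval₂_id, eval₂_id, ← hpq] at this
    simp only [Set.mem_ofPred_eq, eval_mul, eval_pow, eval_X]
    rw [← this, mul_assoc, ← mul_pow, inv_mul_cancel₀ hx0, one_pow, mul_one]
  have hcoeff := congrArg (coeff · q.natDegree) hrev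
  simp only [coeff_mul_X_pow', le_refl, if_true, Nat.sub_self, coeff_reverse, revAt_le] at hcoeff
  rwa [coeff_zero_eq_eval_zero, coeff_zero_eq_eval_zero] at hcoeff

variable [Field L] {φ : K →+* L} {t : L}

open Polynomial in
lemma ratFunc_eval_eq_div {x : RatFunc K} {p q : K[X]} (hq : q.eval₂ φ t ≠ 0)
    (h : x * algebraMap K[X] (RatFunc K) q = algebraMap K[X] (RatFunc K) p) :
    x.eval φ t = p.eval₂ φ t / q.eval₂ φ t := by
  have hq0 : q ≠ 0 := by rintro rfl; simp at hq
  have hx : x = algebraMap _ _ p / algebraMap _ _ q :=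
    eq_div_of_mul_eq (RatFunc.algebraMap_ne_zero hq0) h
  have hdenom : x.denom.eval₂ φ t ≠ 0 := fun hd =>
    hq (eval₂_eq_zero_of_dvd_of_eval₂_eq_zero φ t ((RatFunc.denom_dvd hq0).2 ⟨p, hx⟩) hd)
  have heval := RatFunc.eval_mul φ t hdenom (y := algebraMap K[X] (RatFunc K) q) (by simp)
  rw [h, RatFunc.eval_algebraMap, RatFunc.eval_algebraMap] at heval
  exact eq_div_of_mul_eq hq heval.symm

lemma ratFunc_eval_X_zpow_mul_C (ht : t ≠ 0) (e : ℤ) (a : K) :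
    (RatFunc.X ^ e * RatFunc.C a).eval φ t = t ^ e * φ a := by
  have hX : (RatFunc.X : RatFunc K) ≠ 0 := RatFunc.X_ne_zero
  obtain ⟨m, n, rfl⟩ : ∃ m n : ℕ, e = (m : ℤ) - n := ⟨e.toNat, (-e).toNat, by omega⟩
  rw [ratFunc_eval_eq_div (p := Polynomial.X ^ m * Polynomial.C a) (q := Polynomial.X ^ n)
    (by simp [ht]), zpow_sub₀ ht, div_mul_eq_mul_div]
  · simp [-Polynomial.X_pow_mul_C]
  · simp only [zpow_sub₀ hX, zpow_natCast, map_mul, map_pow, RatFunc.algebraMap_X,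
      RatFunc.algebraMap_C]
    field_simp

lemma single_zpow (i : ℤ) (a : K) (e : ℤ) :
    (HahnSeries.single i a : LaurentSeries K) ^ e = HahnSeries.single (e * i) (a ^ e) := by
  obtain ⟨n, rfl | rfl⟩ := e.eq_nat_or_neg <;>
    simp [HahnSeries.single_pow, HahnSeries.inv_single]

/-- The ring homomorphism of Laurent series obtained by applying `φ` to the coefficients. -/
def laurentMap (φ : K →+* L) : LaurentSeries K →+* LaurentSeries L where
  toFun x := x.map φ
  map_zero' := by ext; simp
  map_one' := by rw [← HahnSeries.C_one, HahnSeries.map_C, map_one, HahnSeries.C_one]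
  map_add' x y := by ext; simp
  map_mul' x y := by
    have hsupp (z : LaurentSeries K) : (z.map φ).support = z.support := by ext i; simp
    ext i
    simp only [HahnSeries.map_coeff, HahnSeries.coeff_mul, map_sum, hsupp, map_mul]

lemma laurentMap_coeff (φ : K →+* L) (x : LaurentSeries K) (i : ℤ) :
    (laurentMap φ x).coeff i = φ (x.coeff i) := rfl

lemma laurentMap_single (φ : K →+* L) (i : ℤ) (a : K) :
    laurentMap φ (HahnSeries.single i a) = HahnSeries.single i (φ a) :=
  HahnSeries.map_single (f := (φ : ZeroHom K L))

end General

variable {k : Type} [Field k] {l : ℕ}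

section RationalFunctions

lemma algebraMap_mvPolynomial_C (c : k) :
    algebraMap (MvPolynomial (Fin l) k) (RF k l) (MvPolynomial.C c) = algebraMap k (RF k l) c :=
  (IsScalarTower.algebraMap_apply k (MvPolynomial (Fin l) k) (RF k l) c).symm

lemma zv_ne_zero (i : Fin l) : (zv i : RF k l) ≠ 0 := by simp [zv]

lemma exists_mul_algebraMap_eq (x : RF k l) : ∃ p q : MvPolynomial (Fin l) k,
    q ≠ 0 ∧ x * algebraMap _ (RF k l) q = algebraMap _ (RF k l) p := by
  obtain ⟨p, q, hq, rfl⟩ := IsFractionRing.div_surjective (A := MvPolynomial (Fin l) k) x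
  have hq0 : q ≠ 0 := nonZeroDivisors.ne_zero hq
  exact ⟨p, q, hq0, div_mul_cancel₀ _ (by simpa using hq0)⟩

lemma dependsOnlyOn_univ (x : RF k l) : dependsOnlyOn Finset.univ x := by
  have hpoly (p : MvPolynomial (Fin l) k) :
      dependsOnlyOn Finset.univ (algebraMap _ (RF k l) p) := by
    induction p using MvPolynomial.induction_on with
    | C c => exact Subfield.subset_closure (.inl ⟨c, (algebraMap_mvPolynomial_C c).symm⟩)
    | add p q hp hq => rw [map_add]; exact add_mem hp hq
    | mul_X p i hp =>
      rw [map_mul]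
      exact mul_mem hp (Subfield.subset_closure (.inr ⟨i, Finset.mem_univ i, rfl⟩))
  obtain ⟨p, q, -, rfl⟩ := IsFractionRing.div_surjective (A := MvPolynomial (Fin l) k) x
  exact div_mem (hpoly p) (hpoly q)

lemma dependsOnlyOn.algHom_eq {A : Type*} [Field A] [Algebra k A] {S : Finset (Fin l)}
    {x : RF k l} (hx : dependsOnlyOn S x) {φ ψ : RF k l →ₐ[k] A}
    (h : ∀ i ∈ S, φ (zv i) = ψ (zv i)) : φ x = ψ x := by
  refine RingHom.eqOn_field_closure (f := (φ : RF k l →+* A)) (g := ψ) ?_ hx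
  rintro _ (⟨c, rfl⟩ | ⟨i, hi, rfl⟩)
  · simp
  · exact h i hi

lemma derivation_map_eq {δ δ' : Derivation k (RF k l) (RF k l)} {φ : RF k l →ₐ[k] RF k l}
    (h : ∀ i, δ (φ (zv i)) = φ (δ' (zv i))) (x : RF k l) : δ (φ x) = φ (δ' x) := by
  induction dependsOnlyOn_univ x using Subfield.closure_induction with
  | mem x hx =>
    obtain ⟨c, rfl⟩ | ⟨i, -, rfl⟩ := hx
    · simp
    · exact h i
  | one => simp
  | add x y _ _ hx hy => simp only [map_add, hx, hy]
  | neg x _ hx => simp only [map_neg, hx]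
  | inv x _ hx => simp only [map_inv₀, Derivation.leibniz_inv, smul_eq_mul, map_mul, map_neg,
      map_pow, hx]
  | mul x y _ _ hx hy => simp only [map_mul, Derivation.leibniz, smul_eq_mul, map_add, hx, hy]

end RationalFunctions

section Homogeneous

lemma scaleJ_algebraMap (J : Finset (Fin l)) (p : MvPolynomial (Fin l) k) :
    scaleJ J (algebraMap _ (RF k l) p) = toRatFuncHom k l (scaleAux k l J p) :=
  IsFractionRing.lift_algebraMap _ p

lemma scaleJ_const (J : Finset (Fin l)) (c : k) :
    scaleJ J (algebraMap k (RF k l) c) = RatFunc.C (algebraMap k (RF k l) c) := by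
  rw [← algebraMap_mvPolynomial_C, scaleJ_algebraMap]
  simp [toRatFuncHom, scaleAux, MvPolynomial.algebraMap_eq, Polynomial.algebraMap_apply]

lemma scaleJ_zv (J : Finset (Fin l)) (i : Fin l) :
    scaleJ J (zv i : RF k l) = (if i ∈ J then RatFunc.X else 1) * RatFunc.C (zv i : RF k l) := by
  rw [zv, scaleJ_algebraMap]
  by_cases h : i ∈ J <;> simp [toRatFuncHom, scaleAux, h, -Polynomial.X_mul_C]

variable {L : Type} [Field L] {S : Finset (Fin l)} {θ ψ : RF k l →+* L} {t : L}

lemma eval_scaleJ (hc : ∀ c, ψ (algebraMap k _ c) = θ (algebraMap k _ c))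
    (hz : ∀ i, ψ (zv i) = (if i ∈ S then t else 1) * θ (zv i)) (x : RF k l) :
    (scaleJ S x).eval θ t = ψ x := by
  set s := (Polynomial.mapRingHom (algebraMap (MvPolynomial (Fin l) k) (RF k l))).comp
    (scaleAux k l S) with hs
  have heval : (Polynomial.eval₂RingHom θ t).comp s = ψ.comp (algebraMap _ _) := by
    refine MvPolynomial.ringHom_ext (fun c => ?_) fun i => ?_
    · simp [hs, scaleAux, MvPolynomial.algebraMap_eq, Polynomial.algebraMap_apply,
        algebraMap_mvPolynomial_C, hc]
    · have := hz i
      by_cases hi : i ∈ S <;> simp_all [scaleAux, zv, -Polynomial.X_mul_C]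
  obtain ⟨p, q, hq, hx⟩ := exists_mul_algebraMap_eq x
  have hψq : ψ (algebraMap _ _ q) ≠ 0 := by simpa using hq
  have hp : (s p).eval₂ θ t = ψ (algebraMap _ _ p) := DFunLike.congr_fun heval p
  have hq : (s q).eval₂ θ t = ψ (algebraMap _ _ q) := DFunLike.congr_fun heval q
  rw [ratFunc_eval_eq_div (p := s p) (q := s q) (hq ▸ hψq), hp, hq, ← hx, map_mul,
    mul_div_cancel_right₀ _ hψq]
  have := congrArg (scaleJ S) hx
  rwa [map_mul, scaleJ_algebraMap, scaleJ_algebraMap] at this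

lemma IsHomogeneousOn.map_eq {e : ℤ} {α : RF k l} (h : IsHomogeneousOn S e α) (ht : t ≠ 0)
    (hc : ∀ c, ψ (algebraMap k _ c) = θ (algebraMap k _ c))
    (hz : ∀ i, ψ (zv i) = (if i ∈ S then t else 1) * θ (zv i)) : ψ α = t ^ e * θ α := by
  rw [← eval_scaleJ hc hz, h, ratFunc_eval_X_zpow_mul_C ht]

end Homogeneous

section Translation

open Polynomial

lemma translateAux_injective (c : k) : Function.Injective
    ((IsScalarTower.toAlgHom k (MvPolynomial (Fin l) k) (RF k l)).comp
      (MvPolynomial.aeval fun i => MvPolynomial.X i + MvPolynomial.C c)) := by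
  have hinv : (MvPolynomial.aeval fun i => MvPolynomial.X i - MvPolynomial.C c).comp
      (MvPolynomial.aeval fun i => MvPolynomial.X i + MvPolynomial.C c) =
      AlgHom.id k (MvPolynomial (Fin l) k) :=
    MvPolynomial.algHom_ext fun i => by simp [MvPolynomial.algebraMap_eq]
  rw [AlgHom.coe_comp]
  refine (IsFractionRing.injective _ (RF k l)).comp (Function.LeftInverse.injective
    (g := MvPolynomial.aeval fun i => MvPolynomial.X i - MvPolynomial.C c) fun p => ?_)
  rw [← AlgHom.comp_apply, hinv, AlgHom.id_apply]

/-- The translation `zᵢ ↦ zᵢ + c` of all variables. -/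
def translate (c : k) : RF k l →ₐ[k] RF k l :=
  IsFractionRing.liftAlgHom (translateAux_injective c)

lemma translate_algebraMap (c : k) (p : MvPolynomial (Fin l) k) :
    translate c (algebraMap _ (RF k l) p) = algebraMap _ (RF k l)
      (MvPolynomial.aeval (fun i => MvPolynomial.X i + MvPolynomial.C c) p) :=
  IsFractionRing.lift_algebraMap (translateAux_injective c) p

lemma translate_zv (c : k) (i : Fin l) :
    translate c (zv i : RF k l) = zv i + algebraMap k _ c := by
  rw [zv, translate_algebraMap, MvPolynomial.aeval_X, map_add, algebraMap_mvPolynomial_C]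

lemma translate_zero (x : RF k l) : translate 0 x = x :=
  (dependsOnlyOn_univ x).algHom_eq (ψ := AlgHom.id k _) fun i _ => by simp [translate_zv]

/-- The substitution `zᵢ ↦ zᵢ + X` in polynomials: the translation by an indeterminate. -/
def genericTranslate (k : Type) [Field k] (l : ℕ) : MvPolynomial (Fin l) k →ₐ[k] (RF k l)[X] :=
  MvPolynomial.aeval fun i => C (zv i) + X

lemma eval_genericTranslate (c : k) (p : MvPolynomial (Fin l) k) :
    (genericTranslate k l p).eval (algebraMap k _ c) = translate c (algebraMap _ (RF k l) p) := by
  induction p using MvPolynomial.induction_on with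
  | C a => simp [algebraMap_mvPolynomial_C, genericTranslate, Polynomial.algebraMap_apply]
  | add p q hp hq => simp only [map_add, eval_add, hp, hq]
  | mul_X p i hp =>
    have := translate_zv c i
    simp_all [genericTranslate, zv]

lemma eval_zero_genericTranslate (p : MvPolynomial (Fin l) k) :
    (genericTranslate k l p).eval 0 = algebraMap _ (RF k l) p := by
  simpa [translate_zero] using eval_genericTranslate 0 p

lemma derivative_genericTranslate (p : MvPolynomial (Fin l) k) :
    derivative (genericTranslate k l p) =
      genericTranslate k l (MvPolynomial.mkDerivation k (fun _ => 1) p) := by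
  induction p using MvPolynomial.induction_on with
  | C a => simp [genericTranslate, Polynomial.algebraMap_apply]
  | add p q hp hq => simp only [map_add, hp, hq]
  | mul_X p i hp =>
    have hX : genericTranslate k l (MvPolynomial.X i) = C (zv i) + X := MvPolynomial.aeval_X _ i
    simp only [map_mul, derivative_mul, hp, hX, derivative_C, derivative_X,
      Derivation.leibniz, MvPolynomial.mkDerivation_X, smul_eq_mul, map_add, map_one]
    ring

lemma derivation_algebraMap {δ : Derivation k (RF k l) (RF k l)} (hδ : ∀ i, δ (zv i) = 1)
    (p : MvPolynomial (Fin l) k) : δ (algebraMap _ _ p) =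
      algebraMap _ _ (MvPolynomial.mkDerivation k (fun _ => (1 : MvPolynomial (Fin l) k)) p) := by
  induction p using MvPolynomial.induction_on with
  | C a => simp [algebraMap_mvPolynomial_C]
  | add p q hp hq => simp only [map_add, hp, hq]
  | mul_X p i hp =>
    have := hδ i
    simp_all [zv, MvPolynomial.mkDerivation_X]

-- With `β = P / Q`, both `P(z + X)` and `β Q(z + X)` solve `f' Q(z + X) = f Q(z + X)'`.
lemma translate_eq_self_of_derivation_eq_zero [CharZero k] {δ : Derivation k (RF k l) (RF k l)}
    (hδ : ∀ i, δ (zv i) = 1) {β : RF k l} (hβ : δ β = 0) (c : k) : translate c β = β := by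
  have : CharZero (RF k l) := charZero_of_injective_algebraMap (algebraMap k (RF k l)).injective
  obtain ⟨P, Q, hQ, hPQ⟩ := exists_mul_algebraMap_eq β
  have hQ0 : algebraMap _ (RF k l) Q ≠ 0 := by simpa using hQ
  set p := genericTranslate k l P with hp
  set q := genericTranslate k l Q with hq
  have hpq : derivative p * q = p * derivative q := by
    have hδPQ := congrArg δ hPQ
    rw [Derivation.leibniz, hβ, smul_zero, add_zero, smul_eq_mul, derivation_algebraMap hδ,
      derivation_algebraMap hδ] at hδPQ
    rw [hp, hq, derivative_genericTranslate, derivative_genericTranslate, ← map_mul, ← map_mul]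
    congr 1
    apply IsFractionRing.injective (MvPolynomial (Fin l) k) (RF k l)
    rw [map_mul, map_mul, ← hδPQ, ← hPQ]
    ring
  have hzero : p - C β * q = 0 := by
    refine eq_zero_of_derivative_mul_eq (g := q) (a := 0) ?_ ?_ ?_
    · simp [hp, hq, eval_zero_genericTranslate, hPQ]
    · simpa [hq, eval_zero_genericTranslate] using hQ0
    · simp only [derivative_sub, derivative_C_mul]
      linear_combination hpq
  have heval := congrArg (eval (algebraMap k _ c)) hzero
  simp only [eval_sub, eval_mul, eval_C, eval_zero, hp, hq, eval_genericTranslate, ← hPQ, map_mul]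
    at heval
  have hτQ : translate c (algebraMap _ (RF k l) Q) ≠ 0 := by simpa using hQ
  exact mul_right_cancel₀ hτQ (sub_eq_zero.1 heval)

lemma exists_polynomial_translate {α : RF k l} (hα : α ∈ Phi k l) :
    ∃ F : (RF k l)[X], ∀ c : k, translate c α = F.eval (algebraMap k _ c) := by
  obtain ⟨p, e, rfl⟩ := hα
  refine ⟨genericTranslate k l p * C (∏ i : Fin l, ∏ j : Fin l,
    (if i < j then (zv i - zv j) ^ e i j else 1)), fun c => ?_⟩
  have hdiff (i j : Fin l) : translate c (zv i - zv j : RF k l) = zv i - zv j := by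
    rw [map_sub, translate_zv, translate_zv, add_sub_add_right_eq_sub]
  rw [eval_mul, eval_genericTranslate, eval_C, map_mul]
  congr 1
  simp only [map_prod, apply_ite (translate c), map_zpow₀, hdiff, map_one]

end Translation

section Inversion

/-- `ι` is the substitution inverting the variables `zᵢ`, `i ∈ S`, and fixing the others. -/
def IsInversionOn (S : Finset (Fin l)) (ι : RF k l →ₐ[k] RF k l) : Prop :=
  ∀ i, ι (zv i) = if i ∈ S then (zv i)⁻¹ else zv i

/-- The paper's `β*`, for a function `β` of the variables `zᵢ`, `i ∈ S`, where `ι` is the inversion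
of these variables. -/
def inversionStar (d : Fin l → ℤ) (S : Finset (Fin l)) (ι : RF k l →ₐ[k] RF k l) (β : RF k l) :
    RF k l :=
  (-1) ^ (∑ i ∈ S, d i) * (∏ i ∈ S, zv i ^ (-(2 * d i))) * ι β

variable {S T : Finset (Fin l)} {ι κ : RF k l →ₐ[k] RF k l}

lemma IsInversionOn.map_of_mem (hι : IsInversionOn S ι) {i : Fin l} (hi : i ∈ S) :
    ι (zv i) = (zv i)⁻¹ := by
  rw [hι, if_pos hi]

lemma IsInversionOn.map_of_notMem (hι : IsInversionOn S ι) {i : Fin l} (hi : i ∉ S) :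
    ι (zv i) = zv i := by
  rw [hι, if_neg hi]

lemma IsInversionOn.comp (hι : IsInversionOn S ι) (hκ : IsInversionOn T κ) (h : Disjoint S T) :
    IsInversionOn (S ∪ T) (ι.comp κ) := by
  intro i
  by_cases hS : i ∈ S
  · simp [hκ.map_of_notMem (Finset.disjoint_left.1 h hS), hι.map_of_mem hS, hS]
  · by_cases hT : i ∈ T
    · simp [hκ.map_of_mem hT, hι.map_of_notMem hS, hT]
    · simp [hκ.map_of_notMem hT, hι.map_of_notMem hS, hS, hT]

lemma IsInversionOn.involutive (hι : IsInversionOn S ι) : Function.Involutive ι := fun x =>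
  (dependsOnlyOn_univ x).algHom_eq (φ := ι.comp ι) (ψ := AlgHom.id k _) fun i _ => by
    by_cases hi : i ∈ S
    · simp [hι.map_of_mem hi]
    · simp [hι.map_of_notMem hi]

lemma IsInversionOn.map_of_dependsOnlyOn (hι : IsInversionOn S ι) {x : RF k l}
    (hx : dependsOnlyOn T x) (h : Disjoint S T) : ι x = x :=
  hx.algHom_eq (ψ := AlgHom.id k _) fun _ hi => hι.map_of_notMem (Finset.disjoint_right.1 h hi)

lemma inversionStar_union_mul (d : Fin l → ℤ) (hι : IsInversionOn S ι) (hκ : IsInversionOn T κ)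
    (h : Disjoint S T) {x y : RF k l} (hx : dependsOnlyOn S x) (hy : dependsOnlyOn T y) :
    inversionStar d (S ∪ T) (ι.comp κ) (x * y) = inversionStar d T κ y * inversionStar d S ι x := by
  have hκx : κ x = x := hκ.map_of_dependsOnlyOn hx h.symm
  have hικy : ι (κ y) = κ y := hy.algHom_eq (φ := ι.comp κ) fun i hi => by
    simp [hκ.map_of_mem hi, hι.map_of_notMem (Finset.disjoint_right.1 h hi)]
  simp only [inversionStar, AlgHom.comp_apply, map_mul, hκx, hικy, Finset.sum_union h,
    Finset.prod_union h, zpow_add₀ (neg_ne_zero.2 (one_ne_zero (α := RF k l)))]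
  ring

lemma inversionStar_sum {J : Type*} [Fintype J] (d : Fin l → ℤ) (S : Finset (Fin l))
    (ι : RF k l →ₐ[k] RF k l) (x : J → RF k l) :
    inversionStar d S ι (∑ j, x j) = ∑ j, inversionStar d S ι (x j) := by
  simp only [inversionStar, map_sum, Finset.mul_sum]

end Inversion

section Invariance

variable {ι : RF k l →ₐ[k] RF k l} {α : RF k l}

lemma derivation_prod_zv_zpow_mul_inversion_eq_zero {δ δ' : Derivation k (RF k l) (RF k l)}
    (hδ : ∀ i, δ (zv i) = 1) (hδ' : ∀ i, δ' (zv i) = zv i ^ 2)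
    (hι : IsInversionOn Finset.univ ι) {n : Fin l → ℤ}
    (hα : δ' α + (∑ i, n i * zv i) * α = 0) : δ ((∏ i, zv i ^ (-n i)) * ι α) = 0 := by
  have hιz (i : Fin l) : ι (zv i) = (zv i)⁻¹ := hι.map_of_mem (Finset.mem_univ i)
  have hδι : δ (ι α) = ι ((-δ') α) := derivation_map_eq (fun i => by
    simp [hιz, Derivation.leibniz_inv, hδ, hδ']) α
  rw [Derivation.leibniz, hδι, derivation_prod_zpow δ fun i _ => zv_ne_zero i]
  have hια := congrArg ι hα
  simp only [map_add, map_mul, map_sum, map_intCast, hιz, map_zero] at hια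
  simp only [Derivation.neg_apply, map_neg, smul_eq_mul, hδ, Int.cast_neg, neg_mul,
    Finset.sum_neg_distrib, mul_one]
  linear_combination (-∏ i, zv i ^ (-n i)) * hια

lemma eq_prod_mul_inversion_translate_inversion (hι : IsInversionOn Finset.univ ι)
    {n : Fin l → ℤ} {b : k}
    (hα : translate b ((∏ i, zv i ^ (-n i)) * ι α) = (∏ i, zv i ^ (-n i)) * ι α) :
    α = (∏ i, (1 + algebraMap k _ b * zv i) ^ (-n i)) * ι (translate b (ι α)) := by
  have hιz (i : Fin l) : ι (zv i) = (zv i)⁻¹ := hι.map_of_mem (Finset.mem_univ i)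
  have hια := congrArg ι hα
  simp only [map_mul, map_prod, map_zpow₀, translate_zv, map_add, hιz, AlgHom.commutes,
    hι.involutive α] at hια
  calc α = (∏ i, zv i ^ (-n i)) * ((∏ i, (zv i)⁻¹ ^ (-n i)) * α) := by
        have hzz (i : Fin l) : (zv i : RF k l) * (zv i)⁻¹ = 1 := mul_inv_cancel₀ (zv_ne_zero i)
        simp only [← mul_assoc, ← Finset.prod_mul_distrib, ← mul_zpow, hzz, one_zpow,
          Finset.prod_const_one, one_mul]
    _ = _ := by
        rw [← hια, ← mul_assoc, ← Finset.prod_mul_distrib]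
        congr 2 with i
        rw [← mul_zpow, mul_add, mul_inv_cancel₀ (zv_ne_zero i), mul_comm (zv i)]

lemma translate_inversion_translate_inversion (hι : IsInversionOn Finset.univ ι) {e : ℤ}
    (hα : IsHomogeneousOn Finset.univ e α) {c : k} (hc : c ≠ 0) :
    translate c (ι (translate (-c⁻¹) (ι α))) =
      (-algebraMap k _ c ^ 2) ^ e * ι (translate c⁻¹ α) := by
  have hιz (i : Fin l) : ι (zv i) = (zv i)⁻¹ := hι.map_of_mem (Finset.mem_univ i)
  refine hα.map_eq (L := RF k l) (θ := (ι.comp (translate c⁻¹)).toRingHom)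
    (ψ := ((translate c).comp (ι.comp ((translate (-c⁻¹)).comp ι))).toRingHom)
    (by simpa using hc) (fun r => by simp) fun i => ?_
  have hz : (zv i : RF k l) ≠ 0 := zv_ne_zero i
  have hc0 : algebraMap k (RF k l) c ≠ 0 := by simpa using hc
  have hzc : zv i + algebraMap k (RF k l) c ≠ 0 := by
    rw [← translate_zv]
    simpa using hz
  have hinv : (zv i + algebraMap k (RF k l) c)⁻¹ + -(algebraMap k _ c)⁻¹ =
      -(zv i / (algebraMap k _ c * (zv i + algebraMap k _ c))) := by
    field_simp
    ring
  simp only [AlgHom.toRingHom_eq_coe, RingHom.coe_coe, AlgHom.coe_comp, Function.comp_apply, hιz,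
    map_inv₀, translate_zv, map_add, map_neg, AlgHom.commutes, hinv, Finset.mem_univ, if_true]
  field_simp
  ring

lemma translate_eq_inversionStar_translate_inv (hι : IsInversionOn Finset.univ ι)
    {d : Fin l → ℤ} (hhom : IsHomogeneousOn Finset.univ (-∑ i, d i) α)
    (hα : ∀ b, translate b ((∏ i, zv i ^ (-(2 * d i))) * ι α) =
      (∏ i, zv i ^ (-(2 * d i))) * ι α) {c : k} (hc : c ≠ 0) :
    translate c α = inversionStar d Finset.univ ι (translate c⁻¹ α) := by
  set s := ∑ i, d i with hs
  set a := algebraMap k (RF k l) c with ha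
  have ha0 : a ≠ 0 := by simpa [ha] using hc
  have hfactor : translate c (∏ i, (1 + algebraMap k _ (-c⁻¹) * zv i : RF k l) ^ (-(2 * d i))) =
      a ^ (2 * s) * ∏ i, zv i ^ (-(2 * d i)) := by
    have hlin (i : Fin l) : translate c (1 + algebraMap k _ (-c⁻¹) * zv i : RF k l) =
        -(a⁻¹ * zv i) := by
      have hτa : translate c a = a := AlgHom.commutes _ c
      simp only [map_add, map_one, map_mul, translate_zv, map_neg, map_inv₀, ← ha, hτa]
      field_simp
      ring
    rw [hs, Finset.mul_sum, ← prod_zpow_eq_zpow_sum₀ ha0, ← Finset.prod_mul_distrib, map_prod]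
    refine Finset.prod_congr rfl fun i _ => ?_
    rw [map_zpow₀, hlin, Even.neg_zpow (by simp), mul_zpow, inv_zpow', neg_neg]
  have hsign : (-a ^ 2) ^ (-s) = (-1) ^ s * (a ^ (2 * s))⁻¹ := by
    rw [neg_eq_neg_one_mul, mul_zpow, zpow_neg, ← inv_zpow, inv_neg_one, zpow_neg, zpow_mul]
    norm_cast
  calc translate c α
      = translate c ((∏ i, (1 + algebraMap k _ (-c⁻¹) * zv i) ^ (-(2 * d i))) *
          ι (translate (-c⁻¹) (ι α))) :=
        congrArg _ (eq_prod_mul_inversion_translate_inversion hι (hα (-c⁻¹)))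
    _ = a ^ (2 * s) * (∏ i, zv i ^ (-(2 * d i))) *
          ((-1) ^ s * (a ^ (2 * s))⁻¹ * ι (translate c⁻¹ α)) := by
        rw [map_mul, hfactor, translate_inversion_translate_inversion hι hhom hc, hsign]
    _ = inversionStar d Finset.univ ι (translate c⁻¹ α) := by
        rw [inversionStar, ← hs]
        field_simp

lemma DeltaStar_eq (D : Fin l → Derivation k (RF k l) (RF k l)) (n : Fin l → ℤ) (α : RF k l) :
    DeltaStar D n α = (∑ i, (zv i : RF k l) ^ 2 • D i) α + (∑ i, n i * zv i) * α := by
  rw [DeltaStar, Finset.sum_add_distrib, derivation_sum_apply, Finset.sum_mul]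
  rfl

lemma translate_prod_zv_zpow_mul_inversion [CharZero k]
    {D : Fin l → Derivation k (RF k l) (RF k l)} (hD : IsPartialDeriv D) {n : Fin l → ℤ}
    (hα : DeltaStar D n α = 0) (hι : IsInversionOn Finset.univ ι) (b : k) :
    translate b ((∏ i, zv i ^ (-n i)) * ι α) = (∏ i, zv i ^ (-n i)) * ι α := by
  have hδ (i : Fin l) : (∑ j, D j) (zv i) = 1 := by
    simp [derivation_sum_apply, hD _ i]
  have hδ' (i : Fin l) : (∑ j, (zv j : RF k l) ^ 2 • D j) (zv i) = zv i ^ 2 := by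
    simp [derivation_sum_apply, hD _ i]
  exact translate_eq_self_of_derivation_eq_zero hδ
    (derivation_prod_zv_zpow_mul_inversion_eq_zero hδ hδ' hι (DeltaStar_eq D n α ▸ hα)) b

theorem inversionStar_eq_self [CharZero k] {D : Fin l → Derivation k (RF k l) (RF k l)}
    (hD : IsPartialDeriv D) {d : Fin l → ℤ} (hΦ : α ∈ Phi k l)
    (hreg : DeltaStar D (fun i => 2 * d i) α = 0)
    (hhom : IsHomogeneousOn Finset.univ (-∑ i, d i) α) (hι : IsInversionOn Finset.univ ι) :
    inversionStar d Finset.univ ι α = α := by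
  obtain ⟨F, hF⟩ := exists_polynomial_translate hΦ
  set G := Polynomial.C ((-1) ^ (∑ i, d i) * ∏ i, zv i ^ (-(2 * d i))) *
    F.map (ι : RF k l →+* RF k l) with hG
  have hGF (c : k) : G.eval (algebraMap k _ c) = inversionStar d Finset.univ ι (translate c α) := by
    have := Polynomial.eval_map_apply (ι : RF k l →+* RF k l) (p := F) (algebraMap k _ c)
    rw [RingHom.coe_coe, AlgHom.commutes] at this
    rw [hG, Polynomial.eval_mul, Polynomial.eval_C, this, inversionStar, hF]
  have hinf : (algebraMap k (RF k l) '' {0}ᶜ).Infinite :=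
    (Set.finite_singleton 0).infinite_compl.image (algebraMap k (RF k l)).injective.injOn
  have hzero : F.eval 0 = G.eval 0 := eval_zero_eq_of_eval_eq_eval_inv hinf <| by
    rintro _ ⟨c, hc : c ≠ 0, rfl⟩
    refine ⟨by simpa using hc, ?_⟩
    rw [← map_inv₀, hGF, ← hF]
    exact translate_eq_inversionStar_translate_inv hι hhom
      (translate_prod_zv_zpow_mul_inversion hD hreg hι) hc
  rw [← map_zero (algebraMap k (RF k l)), hGF, ← hF, translate_zero] at hzero
  exact hzero.symm

end Invariance

section Components

open HahnSeries

open scoped RatFunc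

/-- The expansion of a rational function in the domain where the variables `zⱼ`, `j ∈ J`, are much
smaller than the others, graded by the total degree in these variables. -/
def laurentExpansion (J : Finset (Fin l)) : RF k l →+* LaurentSeries (RF k l) :=
  (algebraMap (RatFunc (RF k l)) (LaurentSeries (RF k l))).comp (scaleJ J)

variable {J : Finset (Fin l)}

lemma component_eq_coeff_laurentExpansion (d : Fin l → ℤ) (n : ℤ) (α : RF k l) :
    component J d n α = (laurentExpansion J α).coeff (n - ∑ j ∈ J, d j) := rfl

lemma algebraMap_ratFunc_C (x : RF k l) :
    algebraMap (RatFunc (RF k l)) (LaurentSeries (RF k l)) (RatFunc.C x) = single 0 x := by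
  simpa using (RatFunc.coe_coe (Polynomial.C x)).symm

lemma laurentExpansion_const (c : k) :
    laurentExpansion J (algebraMap k (RF k l) c) = single 0 (algebraMap k _ c) := by
  rw [laurentExpansion, RingHom.comp_apply, scaleJ_const, algebraMap_ratFunc_C]

lemma laurentExpansion_zv (i : Fin l) :
    laurentExpansion J (zv i : RF k l) = single (if i ∈ J then 1 else 0) (zv i) := by
  have hX : algebraMap (RatFunc (RF k l)) (LaurentSeries (RF k l)) RatFunc.X = single 1 1 :=
    RatFunc.coe_X
  rw [laurentExpansion, RingHom.comp_apply, scaleJ_zv, map_mul, algebraMap_ratFunc_C]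
  split_ifs <;> simp [hX]

lemma laurentExpansion_prod_zv_zpow (e : Fin l → ℤ) :
    laurentExpansion J (∏ i, zv i ^ e i : RF k l) = single (∑ j ∈ J, e j) (∏ i, zv i ^ e i) := by
  have hprod (s : Finset (Fin l)) : laurentExpansion J (∏ i ∈ s, zv i ^ e i : RF k l) =
      single (∑ i ∈ s, if i ∈ J then e i else 0) (∏ i ∈ s, zv i ^ e i) := by
    induction s using Finset.induction_on with
    | empty => simp
    | insert i s hi ih =>
      rw [Finset.prod_insert hi, Finset.sum_insert hi, map_mul, ih, map_zpow₀, laurentExpansion_zv,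
        single_zpow, single_mul_single]
      simp
  simpa using hprod Finset.univ

variable {ι : RF k l →ₐ[k] RF k l}

lemma laurentExpansion_compl_inversion (hι : IsInversionOn Finset.univ ι) {e : ℤ} {α : RF k l}
    (hα : IsHomogeneousOn Finset.univ e α) :
    laurentExpansion Jᶜ (ι α) =
      single (-e) 1 * laurentMap (ι : RF k l →+* RF k l) (laurentExpansion J α) := by
  have hιz (i : Fin l) : ι (zv i) = (zv i)⁻¹ := hι.map_of_mem (Finset.mem_univ i)
  have hsingle : (single (-1) 1 : LaurentSeries (RF k l)) ^ e = single (-e) 1 := by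
    rw [single_zpow, one_zpow, mul_neg_one]
  rw [← hsingle]
  refine hα.map_eq (L := LaurentSeries (RF k l)) (ψ := (laurentExpansion Jᶜ).comp ι.toRingHom)
    (θ := (laurentMap ι.toRingHom).comp (laurentExpansion J)) (by simp) (fun c => ?_) fun i => ?_
  · simp [laurentExpansion_const, laurentMap_single]
  · by_cases hi : i ∈ J <;>
      simp [hιz, laurentExpansion_zv, laurentMap_single, inv_single, hi]

theorem component_compl_eq_inversionStar (hι : IsInversionOn Finset.univ ι) {d : Fin l → ℤ}
    {α : RF k l} (hhom : IsHomogeneousOn Finset.univ (-∑ i, d i) α)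
    (hα : inversionStar d Finset.univ ι α = α) (n : ℤ) :
    component Jᶜ d n α = inversionStar d Finset.univ ι (component J d n α) := by
  have hcomm : n - ∑ i ∈ Jᶜ, d i - (∑ i ∈ Jᶜ, -(2 * d i) + ∑ i, d i) = n - ∑ i ∈ J, d i := by
    rw [← Finset.sum_add_sum_compl J, Finset.sum_neg_distrib, ← Finset.mul_sum]
    ring
  have hexp : laurentExpansion Jᶜ α = single (∑ i ∈ Jᶜ, -(2 * d i) + ∑ i, d i)
      ((-1) ^ (∑ i, d i) * ∏ i, zv i ^ (-(2 * d i))) *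
      laurentMap (ι : RF k l →+* RF k l) (laurentExpansion J α) := by
    have hsign : laurentExpansion Jᶜ ((-1 : RF k l) ^ ∑ i, d i) = single 0 ((-1) ^ ∑ i, d i) := by
      simpa using laurentExpansion_const (J := Jᶜ) (l := l) ((-1 : k) ^ ∑ i, d i)
    conv_lhs => rw [← hα, inversionStar, map_mul, map_mul, hsign, laurentExpansion_prod_zv_zpow,
      laurentExpansion_compl_inversion hι hhom, neg_neg]
    rw [← mul_assoc, single_mul_single, single_mul_single, zero_add, mul_one]
  rw [component_eq_coeff_laurentExpansion, component_eq_coeff_laurentExpansion, hexp,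
    coeff_single_mul, laurentMap_coeff, hcomm]
  rfl

end Components

theorem statement3_general [CharZero k] {D : Fin l → Derivation k (RF k l) (RF k l)}
    (hD : IsPartialDeriv D) {d : Fin l → ℤ} {I J : Finset (Fin l)} (hdisj : Disjoint I J)
    (hcover : I ∪ J = Finset.univ) {α : RF k l} (hΦ : α ∈ Phi k l)
    (hreg : DeltaStar D (fun i => 2 * d i) α = 0)
    (hhom : IsHomogeneousOn Finset.univ (-∑ i, d i) α)
    {n : ℤ} {A : Type*} [Fintype A] {a' a'' : A → RF k l}
    (hdecomp : component J d n α = ∑ j, a' j * a'' j)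
    (ha' : ∀ j, dependsOnlyOn I (a' j)) (ha'' : ∀ j, dependsOnlyOn J (a'' j))
    {ιI ιJ : RF k l →ₐ[k] RF k l} (hιI : IsInversionOn I ιI) (hιJ : IsInversionOn J ιJ) :
    component I d n α = ∑ j, inversionStar d J ιJ (a'' j) * inversionStar d I ιI (a' j) := by
  have hι : IsInversionOn Finset.univ (ιI.comp ιJ) := hcover ▸ hιI.comp hιJ hdisj
  have hIJ : I = Jᶜ := IsCompl.eq_compl ⟨hdisj, codisjoint_iff.2 hcover⟩
  calc component I d n α
      = inversionStar d Finset.univ (ιI.comp ιJ) (component J d n α) := by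
        rw [hIJ]
        exact component_compl_eq_inversionStar hι hhom (inversionStar_eq_self hD hΦ hreg hhom hι) n
    _ = ∑ j, inversionStar d (I ∪ J) (ιI.comp ιJ) (a' j * a'' j) := by
        rw [hdecomp, inversionStar_sum, hcover]
    _ = ∑ j, inversionStar d J ιJ (a'' j) * inversionStar d I ιI (a' j) :=
        Finset.sum_congr rfl fun j _ => inversionStar_union_mul d hιI hιJ hdisj (ha' j) (ha'' j)

/-- let `α ∈ Φ^l` be `(2d₁,…,2d_l)`-regular and homogeneous of degree
`-(d₁+⋯+d_l)`.  If the component of degree `n` of `α` with respect to the partition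
`(I,J)` is written as `(α)_n = Σ_j α'_j·α''_j` with `α''_j ∈ Φ` a rational function of
the `J`-variables homogeneous of degree `n - Σ_{j∈J}d_j` and `α'_j` a rational function
of the `I`-variables homogeneous of degree `-n - Σ_{i∈I}d_i`, then the component of
degree `n` of `α` with respect to the swapped partition `(J,I)` equals
`Σ_j (α''_j)*·(α'_j)*`, where `β* = (-1)^{Σ_{i∈S}dᵢ}·(∏_{i∈S}z_i^{-2dᵢ})·β(z↦z⁻¹ on S)`
(the inversions of the `S`-variables being expressed by the homomorphisms `ιI`, `ιJ`). -/
theorem statement3 {k : Type} [Field k] [CharZero k] {l : ℕ}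
    (D : Fin l → Derivation k (RF k l) (RF k l)) (hD : IsPartialDeriv D)
    (d : Fin l → ℤ) (I J : Finset (Fin l)) (hdisj : Disjoint I J)
    (hcover : I ∪ J = Finset.univ)
    (α : RF k l) (hΦ : α ∈ Phi k l)
    (hreg : DeltaStar D (fun i => 2 * d i) α = 0)
    (hhom : IsHomogeneousOn Finset.univ (-(∑ i, d i)) α)
    (n : ℤ) (N : ℕ) (a' a'' : Fin N → RF k l)
    (hdecomp : component J d n α = ∑ j, a' j * a'' j)
    (ha'dep : ∀ j, dependsOnlyOn I (a' j))
    (ha'hom : ∀ j, IsHomogeneousOn I (-n - ∑ i ∈ I, d i) (a' j))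
    (ha''Φ : ∀ j, a'' j ∈ Phi k l)
    (ha''dep : ∀ j, dependsOnlyOn J (a'' j))
    (ha''hom : ∀ j, IsHomogeneousOn J (n - ∑ i ∈ J, d i) (a'' j))
    (ιI ιJ : RF k l →+* RF k l)
    (hιI : ∀ i, ιI (zv i) = if i ∈ I then (zv i)⁻¹ else zv i)
    (hιIc : ∀ c : k, ιI (algebraMap k (RF k l) c) = algebraMap k (RF k l) c)
    (hιJ : ∀ i, ιJ (zv i) = if i ∈ J then (zv i)⁻¹ else zv i)
    (hιJc : ∀ c : k, ιJ (algebraMap k (RF k l) c) = algebraMap k (RF k l) c) :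
    component I d n α =
      ∑ j, (((-1 : RF k l) ^ (∑ i ∈ J, d i)) * (∏ i ∈ J, (zv i) ^ (-(2 * d i))) * ιJ (a'' j)) *
        (((-1 : RF k l) ^ (∑ i ∈ I, d i)) * (∏ i ∈ I, (zv i) ^ (-(2 * d i))) * ιI (a' j)) := by
  exact statement3_general hD hdisj hcover hΦ hreg hhom hdecomp ha'dep ha''dep
    (ιI := { ιI with commutes' := hιIc }) (ιJ := { ιJ with commutes' := hιJc }) hιI hιJ

end Griess
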